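/- Let d ≥ 24 and let C be a positive semidefinite matrix on ℂ^d⊗ℂ^d of rank r whose spectrum is (λ, …, λ, 0, …, 0) with exactly r copies of some λ > 0. Then the following are equivalent: (a) there exists a diagonal matrix D on ℂ^d⊗ℂ^d whose diagonal entries are a permutation of the eigenvalues of C (with multiplicity) such that for every unitary U on ℂ^d⊗ℂ^d, λ(tr_1[UCU*]) ⊕ λ(tr_2[UCU*]) ≺ λ(tr_1[D]) ⊕ λ(tr_2[D]); (b) r ≤ 3 or r ≥ d² − 3. -/

import Mathlib

open Matrix Finset Kronecker
open scoped ComplexOrder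

/-- The first partial trace of a matrix on `ℂ^{d1} ⊗ ℂ^{d2}` (index pairs `(i,s)` ordered
lexicographically): `(tr_1 C)_{s,t} = ∑_i C_{(i,s),(i,t)}`. -/
noncomputable def ptrace1 {d1 d2 : ℕ} (C : Matrix (Fin d1 × Fin d2) (Fin d1 × Fin d2) ℂ) :
    Matrix (Fin d2) (Fin d2) ℂ :=
  Matrix.of fun s t => ∑ i : Fin d1, C (i, s) (i, t)

/-- The second partial trace: `(tr_2 C)_{i,j} = ∑_s C_{(i,s),(j,s)}`. -/
noncomputable def ptrace2 {d1 d2 : ℕ} (C : Matrix (Fin d1 × Fin d2) (Fin d1 × Fin d2) ℂ) :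
    Matrix (Fin d1) (Fin d1) ℂ :=
  Matrix.of fun i j => ∑ s : Fin d2, C (i, s) (j, s)

/-- The sum of the `k` largest entries of the vector `x` (the largest value of a sum of `k`
entries of `x`), i.e. `∑_{i=1}^k x_i^↓`. -/
noncomputable def maxSum {ι : Type*} [Fintype ι] (x : ι → ℝ) (k : ℕ) : ℝ :=
  sSup {s : ℝ | ∃ A : Finset ι, A.card = k ∧ s = ∑ i ∈ A, x i}

/-- `x ≺ y` (majorization): for every `k`, the sum of the `k` largest entries of `x` is at
most the sum of the `k` largest entries of `y`, and the total sums are equal. -/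
def Majorizes {ι κ : Type*} [Fintype ι] [Fintype κ] (x : ι → ℝ) (y : κ → ℝ) : Prop :=
  (∀ k : ℕ, maxSum x k ≤ maxSum y k) ∧ ∑ i, x i = ∑ j, y j

/-- `x ≺_w y` (weak majorization). -/
def WeakMajorizes {ι κ : Type*} [Fintype ι] [Fintype κ] (x : ι → ℝ) (y : κ → ℝ) : Prop :=
  ∀ k : ℕ, maxSum x k ≤ maxSum y k

/-!
By the Schur–Horn argument, the spectra of the two partial traces of `U * C * Uᴴ` are the column
and row sums of a matrix `Q *ᵥ e` on the `d × d` grid, with `e` the spectrum of `C` and `Q` doubly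
stochastic. Majorization by a fixed vector is a convex condition, so by Birkhoff's theorem `Q` may
be taken to be a permutation: for a flat spectrum, (a) says that some set `S` of `r` cells has the
largest column and row sums, in the majorization order, among all sets of `r` cells.

The sum of the marginals of `S` over a set `A` of rows and a set `B` of columns is
`#S + #(S ∩ A × B) - #(S ∩ Aᶜ × Bᶜ)`. The excess over `#S` is at most `#A * #B` and at most `#S`,
which makes up to three cells in a row optimal, and complementation preserves optimality.
Conversely, if both bounds `a * a ≤ r` and `r ≤ d * d - (d - a) * (d - a)` hold, then an `r`-set
lying between `A × B` and the complement of `Aᶜ × Bᶜ`, where `#A = #B = a`, attains the bound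
`a * a`, so an optimal `S` must lie between two such sets as well. If `4 ≤ r ≤ d * d - 4`
and `d ≠ 4`, this applies to two consecutive values of `a`; but then the larger block has a cell
outside all the lines of the smaller one.
-/

section Majorization

lemma finite_setOf_subset_sums {ι : Type*} [Finite ι] (x : ι → ℝ) (k : ℕ) :
    {s : ℝ | ∃ A : Finset ι, #A = k ∧ s = ∑ i ∈ A, x i}.Finite := by
  refine (Set.finite_range fun A : Finset ι => ∑ i ∈ A, x i).subset ?_
  rintro _ ⟨A, -, rfl⟩
  exact ⟨A, rfl⟩

variable {ι κ ι' κ' : Type*} [Fintype ι] [Fintype κ] [Fintype ι'] [Fintype κ']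

lemma sum_le_maxSum (x : ι → ℝ) (A : Finset ι) : ∑ i ∈ A, x i ≤ maxSum x #A :=
  le_csSup (finite_setOf_subset_sums x #A).bddAbove ⟨A, rfl, rfl⟩

lemma exists_sum_eq_maxSum (x : ι → ℝ) {k : ℕ} (hk : k ≤ Fintype.card ι) :
    ∃ A : Finset ι, #A = k ∧ ∑ i ∈ A, x i = maxSum x k := by
  obtain ⟨A₀, -, hA₀⟩ := exists_subset_card_eq (s := (univ : Finset ι)) hk
  obtain ⟨A, hA, hs⟩ := Set.Nonempty.csSup_mem (by exact ⟨_, A₀, hA₀, rfl⟩)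
    (finite_setOf_subset_sums x k)
  exact ⟨A, hA, hs.symm⟩

lemma maxSum_of_card_lt (x : ι → ℝ) {k : ℕ} (hk : Fintype.card ι < k) : maxSum x k = 0 := by
  rw [maxSum, ← Real.sSup_empty]
  congr 1
  refine Set.eq_empty_of_forall_notMem ?_
  rintro _ ⟨A, hA, -⟩
  exact (hA ▸ card_le_univ A).not_gt hk

lemma maxSum_le_iff {x : ι → ℝ} {k : ℕ} (hk : k ≤ Fintype.card ι) {c : ℝ} :
    maxSum x k ≤ c ↔ ∀ A : Finset ι, #A = k → ∑ i ∈ A, x i ≤ c := by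
  constructor
  · rintro h A rfl
    exact (sum_le_maxSum x A).trans h
  · intro h
    obtain ⟨A, hA, hs⟩ := exists_sum_eq_maxSum x hk
    exact hs ▸ h A hA

lemma maxSum_comp_equiv (x : ι → ℝ) (σ : ι' ≃ ι) (k : ℕ) : maxSum (x ∘ σ) k = maxSum x k := by
  simp only [maxSum]
  congr 1
  ext s
  exact σ.finsetCongr.exists_congr fun A => by simp

lemma maxSum_smul (x : ι → ℝ) {c : ℝ} (hc : 0 ≤ c) (k : ℕ) :
    maxSum (c • x) k = c * maxSum x k := by
  rw [maxSum, maxSum, ← smul_eq_mul c, ← Real.sSup_smul_of_nonneg hc]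
  congr 1
  ext s
  simp only [Set.mem_smul_set, Set.mem_ofPred_eq, Pi.smul_apply, ← smul_sum]
  grind

lemma majorizes_comp_equiv {x : ι → ℝ} {y : κ → ℝ} (σ : ι' ≃ ι) (τ : κ' ≃ κ) :
    Majorizes (x ∘ σ) (y ∘ τ) ↔ Majorizes x y := by
  simp only [Majorizes, maxSum_comp_equiv, Function.comp_apply, Equiv.sum_comp]

lemma majorizes_smul_iff {x : ι → ℝ} {y : κ → ℝ} {c : ℝ} (hc : 0 < c) :
    Majorizes (c • x) (c • y) ↔ Majorizes x y := by
  simp only [Majorizes, maxSum_smul _ hc.le, Pi.smul_apply, smul_eq_mul, ← mul_sum,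
    mul_le_mul_iff_right₀ hc, mul_right_inj' hc.ne']

lemma convex_setOf_majorizes (y : κ → ℝ) : Convex ℝ {x : ι → ℝ | Majorizes x y} := by
  rintro x ⟨hx, hx'⟩ z ⟨hz, hz'⟩ a b ha hb hab
  refine ⟨fun k => ?_, ?_⟩
  · rcases le_or_gt k (Fintype.card ι) with hk | hk
    · rw [maxSum_le_iff hk]
      rintro A rfl
      calc ∑ i ∈ A, (a • x + b • z) i = a * ∑ i ∈ A, x i + b * ∑ i ∈ A, z i := by
            simp [sum_add_distrib, mul_sum]
        _ ≤ a * maxSum y #A + b * maxSum y #A := by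
            gcongr
            exacts [(sum_le_maxSum x A).trans (hx _), (sum_le_maxSum z A).trans (hz _)]
        _ = maxSum y #A := by rw [← add_mul, hab, one_mul]
    · rw [maxSum_of_card_lt _ hk, ← maxSum_of_card_lt x hk]
      exact hx k
  · simp [sum_add_distrib, ← mul_sum, hx', hz', ← add_mul, hab]

lemma majorizes_iff_forall_finset (h : Fintype.card ι = Fintype.card κ) {x : ι → ℝ} {y : κ → ℝ} :
    Majorizes x y ↔ (∀ A : Finset ι, ∃ B : Finset κ, #B = #A ∧ ∑ i ∈ A, x i ≤ ∑ j ∈ B, y j) ∧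
      ∑ i, x i = ∑ j, y j := by
  refine and_congr_left' ⟨fun hxy A => ?_, fun hxy k => ?_⟩
  · obtain ⟨B, hB, hs⟩ := exists_sum_eq_maxSum y (h ▸ card_le_univ A)
    exact ⟨B, hB, hs ▸ (sum_le_maxSum x A).trans (hxy _)⟩
  · rcases le_or_gt k (Fintype.card ι) with hk | hk
    · rw [maxSum_le_iff hk]
      rintro A rfl
      obtain ⟨B, hB, hs⟩ := hxy A
      exact hs.trans (hB ▸ sum_le_maxSum y B)
    · rw [maxSum_of_card_lt x hk, maxSum_of_card_lt y (h ▸ hk)]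

end Majorization

section Marginals

lemma sum_indicator_one {γ : Type*} [DecidableEq γ] (S X : Finset γ) :
    ∑ c ∈ X, (S : Set γ).indicator (1 : γ → ℝ) c = #(S ∩ X) := by
  simp [sum_indicator_eq_sum_inter, inter_comm S]

variable {α β : Type*} [Fintype α] [Fintype β]

/-- The column sums and the row sums of a weight on the cells of an `α × β` grid. For a diagonal
matrix these are the diagonals of the first and of the second partial trace. -/
noncomputable def marginals : (α × β → ℝ) →ₗ[ℝ] (β ⊕ α → ℝ) where
  toFun p := Sum.elim (fun t => ∑ i, p (i, t)) fun i => ∑ s, p (i, s)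
  map_add' p q := by ext (t | i) <;> simp [sum_add_distrib]
  map_smul' c p := by ext (t | i) <;> simp [mul_sum]

lemma marginals_apply (p : α × β → ℝ) :
    marginals p = Sum.elim (fun t => ∑ i, p (i, t)) fun i => ∑ s, p (i, s) := rfl

lemma sum_marginals (p : α × β → ℝ) : ∑ x, marginals p x = 2 * ∑ c, p c := by
  rw [Fintype.sum_sum_type, marginals_apply]
  simp only [Sum.elim_inl, Sum.elim_inr]
  rw [sum_comm, ← Fintype.sum_prod_type, two_mul]

/-- Among all sets of cells of its cardinality, `S` has the largest marginals in the majorization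
order. -/
def IsDominant (S : Finset (α × β)) : Prop :=
  ∀ T : Finset (α × β), #T = #S → Majorizes (marginals ((T : Set (α × β)).indicator 1))
    (marginals ((S : Set (α × β)).indicator 1))

lemma isDominant_empty : IsDominant (∅ : Finset (α × β)) := by
  intro T hT
  rw [card_empty, card_eq_zero] at hT
  subst hT
  exact ⟨fun _ => le_rfl, rfl⟩

section Excess

variable [DecidableEq α] [DecidableEq β]

lemma sum_disjSum_marginals (p : α × β → ℝ) (A : Finset α) (B : Finset β) :
    ∑ x ∈ B.disjSum A, marginals p x =
      ∑ c, p c + ∑ c ∈ A ×ˢ B, p c - ∑ c ∈ Aᶜ ×ˢ Bᶜ, p c := by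
  have hcols : ∑ t ∈ B, ∑ i, p (i, t) = ∑ c ∈ A ×ˢ B, p c + ∑ c ∈ Aᶜ ×ˢ B, p c := by
    rw [sum_comm, sum_product, sum_product, sum_add_sum_compl]
  have hrows : ∑ i ∈ A, ∑ s, p (i, s) = ∑ c ∈ A ×ˢ B, p c + ∑ c ∈ A ×ˢ Bᶜ, p c := by
    simp only [sum_product, ← sum_add_distrib, sum_add_sum_compl]
  have htotal : ∑ c, p c = ∑ c ∈ A ×ˢ B, p c + ∑ c ∈ A ×ˢ Bᶜ, p c +
      (∑ c ∈ Aᶜ ×ˢ B, p c + ∑ c ∈ Aᶜ ×ˢ Bᶜ, p c) := by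
    simp only [sum_product, ← sum_add_distrib, sum_add_sum_compl, Fintype.sum_prod_type]
  rw [sum_disjSum, marginals_apply]
  simp only [Sum.elim_inl, Sum.elim_inr]
  rw [hcols, hrows, htotal]
  ring

/-- The number of cells of `S` at the crossing of a row in `A` with a column in `B`, minus the
number of cells of `S` in none of these lines. It is what the sum of the marginals of `S` over
these lines exceeds `#S` by. -/
def excess (S : Finset (α × β)) (A : Finset α) (B : Finset β) : ℤ :=
  #(S ∩ A ×ˢ B) - #(S ∩ Aᶜ ×ˢ Bᶜ)

lemma sum_disjSum_marginals_indicator (S : Finset (α × β)) (A : Finset α) (B : Finset β) :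
    ∑ x ∈ B.disjSum A, marginals ((S : Set (α × β)).indicator 1) x = #S + excess S A B := by
  rw [sum_disjSum_marginals, sum_indicator_one, sum_indicator_one, sum_indicator_one, inter_univ,
    excess]
  push_cast
  ring

lemma excess_le_card (S : Finset (α × β)) (A : Finset α) (B : Finset β) :
    excess S A B ≤ #S := by
  have := card_le_card (inter_subset_left : S ∩ A ×ˢ B ⊆ S)
  unfold excess
  omega

lemma excess_le_card_mul_card (S : Finset (α × β)) (A : Finset α) (B : Finset β) :
    excess S A B ≤ #A * #B := by
  have := card_le_card (inter_subset_right : S ∩ A ×ˢ B ⊆ A ×ˢ B)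
  rw [card_product] at this
  unfold excess
  lia

lemma excess_eq_card_mul_card_iff {S : Finset (α × β)} {A : Finset α} {B : Finset β} :
    excess S A B = #A * #B ↔ A ×ˢ B ⊆ S ∧ Disjoint S (Aᶜ ×ˢ Bᶜ) := by
  have hle := card_le_card (inter_subset_right : S ∩ A ×ˢ B ⊆ A ×ˢ B)
  rw [disjoint_iff_inter_eq_empty, ← card_eq_zero, ← inter_eq_right, eq_comm (a := S ∩ _),
    ← eq_iff_card_ge_of_superset inter_subset_right, excess, ← Nat.cast_mul, ← card_product]
  omega

lemma excess_mono (S : Finset (α × β)) {A A' : Finset α} {B B' : Finset β} (hA : A ⊆ A')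
    (hB : B ⊆ B') : excess S A B ≤ excess S A' B' := by
  unfold excess
  gcongr

lemma excess_compl (S : Finset (α × β)) (A : Finset α) (B : Finset β) :
    excess Sᶜ Aᶜ Bᶜ = excess S A B +
      (Fintype.card α * Fintype.card β - Fintype.card α * #B - Fintype.card β * #A) := by
  have hsplit (X : Finset (α × β)) : #(Sᶜ ∩ X) + #(S ∩ X) = #X := by
    rw [inter_comm, inter_comm S, ← sdiff_eq_inter_compl, card_sdiff_add_card_inter]
  have hAB := hsplit (A ×ˢ B)
  have hcompl := hsplit (Aᶜ ×ˢ Bᶜ)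
  have hA := card_add_card_compl A
  have hB := card_add_card_compl B
  rw [card_product] at hAB hcompl
  simp only [excess, compl_compl]
  zify at *
  rw [← hA, ← hB]
  linear_combination hcompl - hAB

lemma isDominant_iff_excess {S : Finset (α × β)} :
    IsDominant S ↔ ∀ T : Finset (α × β), #T = #S → ∀ A B,
      ∃ A' B', #A' + #B' = #A + #B ∧ excess T A B ≤ excess S A' B' := by
  refine forall₂_congr fun T hT => ?_
  have hsum : ∑ x, marginals ((T : Set (α × β)).indicator 1) x =
      ∑ x, marginals ((S : Set (α × β)).indicator 1) x := by
    rw [sum_marginals, sum_marginals, sum_indicator_one, sum_indicator_one, inter_univ,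
      inter_univ, hT]
  have hexcess (A : Finset α) (B : Finset β) (A' : Finset α) (B' : Finset β) :
      ∑ x ∈ B.disjSum A, marginals ((T : Set (α × β)).indicator 1) x ≤
        ∑ x ∈ B'.disjSum A', marginals ((S : Set (α × β)).indicator 1) x ↔
      excess T A B ≤ excess S A' B' := by
    rw [sum_disjSum_marginals_indicator, sum_disjSum_marginals_indicator, hT,
      add_le_add_iff_left, Int.cast_le]
  rw [majorizes_iff_forall_finset rfl, and_iff_left hsum]
  constructor
  · intro h A B
    obtain ⟨Y, hY, hle⟩ := h (B.disjSum A)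
    rw [← toLeft_disjSum_toRight (u := Y)] at hY hle
    rw [card_disjSum, card_disjSum] at hY
    exact ⟨Y.toRight, Y.toLeft, by omega, (hexcess ..).1 hle⟩
  · intro h X
    obtain ⟨A', B', hcard, hle⟩ := h X.toRight X.toLeft
    refine ⟨B'.disjSum A', ?_, ?_⟩
    · rw [card_disjSum, ← card_toLeft_add_card_toRight (u := X)]
      omega
    · rw [← toLeft_disjSum_toRight (u := X)]
      exact (hexcess ..).2 hle

lemma IsDominant.compl (hαβ : Fintype.card α = Fintype.card β) {S : Finset (α × β)}
    (hS : IsDominant S) : IsDominant Sᶜ := by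
  refine isDominant_iff_excess.2 fun T hT A B => ?_
  have hTc : #Tᶜ = #S := by
    rw [card_compl, hT, ← card_compl, compl_compl]
  obtain ⟨A', B', hcard, hle⟩ := isDominant_iff_excess.1 hS Tᶜ hTc Aᶜ Bᶜ
  have hA := card_add_card_compl A
  have hB := card_add_card_compl B
  have hA' := card_add_card_compl A'
  have hB' := card_add_card_compl B'
  refine ⟨A'ᶜ, B'ᶜ, by omega, ?_⟩
  have hT' := excess_compl T A B
  have hS' := excess_compl S A' B'
  rw [hαβ] at *
  zify at hA hB hA' hB' hcard
  have : (#A' + #B' : ℤ) = 2 * Fintype.card β - (#A + #B) := by linarith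
  rw [hS']
  rw [hT'] at hle
  linear_combination hle + Fintype.card β * this

lemma IsDominant.exists_sandwich {S : Finset (α × β)} (hS : IsDominant S) {a : ℕ}
    (hα : a ≤ Fintype.card α) (hβ : a ≤ Fintype.card β) (hle : a * a ≤ #S)
    (hge : #S + (Fintype.card α - a) * (Fintype.card β - a) ≤ Fintype.card α * Fintype.card β) :
    ∃ A B, #A = a ∧ #B = a ∧ A ×ˢ B ⊆ S ∧ Disjoint S (Aᶜ ×ˢ Bᶜ) := by
  obtain ⟨A, -, hA⟩ := exists_subset_card_eq (s := (univ : Finset α)) hα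
  obtain ⟨B, -, hB⟩ := exists_subset_card_eq (s := (univ : Finset β)) hβ
  obtain ⟨T, hABT, hTAB, hT⟩ := exists_subsuperset_card_eq (n := #S)
    (show A ×ˢ B ⊆ (Aᶜ ×ˢ Bᶜ)ᶜ by intro c; simp; tauto)
    (by rwa [card_product, hA, hB])
    (by simp only [card_compl, card_product, hA, hB, Fintype.card_prod]; omega)
  have hexcess : excess T A B = #A * #B :=
    excess_eq_card_mul_card_iff.2 ⟨hABT, disjoint_left.2 fun c hc => by simpa using hTAB hc⟩
  obtain ⟨A', B', hcard, hle'⟩ := isDominant_iff_excess.1 hS T hT A B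
  rw [hexcess, hA, hB] at hle'
  rw [hA, hB] at hcard
  have hmul := excess_le_card_mul_card S A' B'
  zify at hcard
  have hA' : (#A' : ℤ) = a := by nlinarith [sq_nonneg ((#A' : ℤ) - #B')]
  have hB' : (#B' : ℤ) = a := by linarith
  rw [hA', hB'] at hmul
  refine ⟨A', B', mod_cast hA', mod_cast hB', excess_eq_card_mul_card_iff.1 ?_⟩
  rw [hA', hB']
  exact hmul.antisymm hle'

end Excess

lemma isDominant_singleton_product (a : α) {F : Finset β} (hF : #F ≤ 3) :
    IsDominant ({a} ×ˢ F) := by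
  classical
  refine isDominant_iff_excess.2 fun T hT A B => ?_
  rw [card_product, card_singleton, one_mul] at hT
  rcases Nat.eq_zero_or_pos (#A + #B) with h0 | hpos
  · refine ⟨∅, ∅, by simp [h0], ?_⟩
    simp_all [excess]
  have hupper : excess T A B ≤ min #F (#A + #B - 1) := by
    have hcard := excess_le_card T A B
    have hmul := excess_le_card_mul_card T A B
    rcases le_or_gt #F (#A + #B - 1) with hle | hlt
    · omega
    · have : #A * #B ≤ #A + #B - 1 := by
        have hA : #A ≤ 3 := by omega
        have hB : #B ≤ 3 := by omega
        interval_cases #A <;> interval_cases #B <;> omega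
      zify at this
      omega
  obtain ⟨G, hGF, hG⟩ := exists_subset_card_eq (min_le_left #F (#A + #B - 1))
  obtain ⟨Y, hGY, -, hY⟩ := exists_subsuperset_card_eq (n := #A + #B)
    (subset_univ (G.disjSum {a})) (by simp; omega)
    (by simpa [add_comm] using add_le_add (card_le_univ A) (card_le_univ B))
  have hattained : excess ({a} ×ˢ F) {a} G = #({a} : Finset α) * #G :=
    excess_eq_card_mul_card_iff.2 ⟨product_subset_product_right hGF, by
      simp [Finset.disjoint_left]⟩
  refine ⟨Y.toRight, Y.toLeft, by rw [add_comm, card_toLeft_add_card_toRight, hY], ?_⟩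
  calc excess T A B ≤ #G := by omega
    _ = excess ({a} ×ˢ F) {a} G := by rw [hattained, card_singleton, Nat.cast_one, one_mul]
    _ ≤ excess ({a} ×ˢ F) Y.toRight Y.toLeft := by
        refine excess_mono _ ?_ ?_
        · simpa using toRight_subset_toRight hGY
        · simpa using toLeft_subset_toLeft hGY

lemma exists_isDominant_of_card_le_three [Nonempty α] {r : ℕ} (hr : r ≤ 3)
    (hβ : r ≤ Fintype.card β) : ∃ S : Finset (α × β), #S = r ∧ IsDominant S := by
  obtain ⟨F, -, hF⟩ := exists_subset_card_eq (s := (univ : Finset β)) hβ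
  exact ⟨{Classical.arbitrary α} ×ˢ F, by simp [hF], isDominant_singleton_product _ (hF ▸ hr)⟩

lemma IsDominant.card_mul_card_lt {S : Finset (α × β)} (hS : IsDominant S) {a : ℕ}
    (hα : a < Fintype.card α) (hβ : a < Fintype.card β) (hle : (a + 1) * (a + 1) ≤ #S) :
    Fintype.card α * Fintype.card β <
      #S + (Fintype.card α - a) * (Fintype.card β - a) := by
  classical
  by_contra! hge
  have hge' : #S + (Fintype.card α - (a + 1)) * (Fintype.card β - (a + 1)) ≤
      Fintype.card α * Fintype.card β := by
    refine le_trans ?_ hge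
    gcongr <;> omega
  obtain ⟨A, B, hA, hB, -, hdisj⟩ := hS.exists_sandwich hα.le hβ.le (by nlinarith) hge
  obtain ⟨A', B', hA', hB', hsub, -⟩ := hS.exists_sandwich hα hβ hle hge'
  obtain ⟨i, hiA', hiA⟩ := exists_mem_notMem_of_card_lt_card (show #A < #A' by omega)
  obtain ⟨s, hsB', hsB⟩ := exists_mem_notMem_of_card_lt_card (show #B < #B' by omega)
  exact disjoint_left.1 hdisj (hsub (mk_mem_product hiA' hsB')) (by simp [hiA, hsB])

-- `a + 1 = ⌊√r⌋` works, except for `d = 4` and `r = 8`; there two full rows of the `4 × 4` grid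
-- form a dominant set.
lemma exists_sq_le_and_add_sq_le {d r : ℕ} (hd : d ≠ 4) (hr : 4 ≤ r) (hr' : r + 4 ≤ d * d) :
    ∃ a, (a + 1) * (a + 1) ≤ r ∧ r + (d - a) * (d - a) ≤ d * d := by
  obtain ⟨k, hk⟩ : ∃ k, r.sqrt = k + 2 :=
    ⟨r.sqrt - 2, by have : 2 ≤ r.sqrt := Nat.le_sqrt.2 hr; omega⟩
  have hle := Nat.sqrt_le r
  have hlt := Nat.lt_succ_sqrt r
  rw [hk] at hle hlt
  refine ⟨k + 1, hle, ?_⟩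
  obtain ⟨e, rfl⟩ : ∃ e, d = k + 3 + e := ⟨d - (k + 3), by
    have : k + 2 < d := by nlinarith
    omega⟩
  rw [show k + 3 + e - (k + 1) = e + 2 by omega]
  rcases e with _ | e
  · nlinarith
  rcases e with _ | e
  · nlinarith [show 1 ≤ k by omega]
  · nlinarith

theorem exists_isDominant_iff {d r : ℕ} (hα : Fintype.card α = d) (hβ : Fintype.card β = d)
    (hd : d ≠ 4) (hrd : r ≤ d * d) :
    (∃ S : Finset (α × β), #S = r ∧ IsDominant S) ↔ r ≤ 3 ∨ d * d - 3 ≤ r := by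
  classical
  constructor
  · rintro ⟨S, rfl, hS⟩
    by_contra! h
    obtain ⟨a, hle, hge⟩ := exists_sq_le_and_add_sq_le hd (r := #S) (by omega) (by omega)
    have had : a < d := by nlinarith
    have := hS.card_mul_card_lt (hα ▸ had) (hβ ▸ had) hle
    rw [hα, hβ] at this
    omega
  · intro h
    obtain rfl | hpos := Nat.eq_zero_or_pos d
    · exact ⟨∅, by simp_all, isDominant_empty⟩
    have : Nonempty α := Fintype.card_pos_iff.1 (hα ▸ hpos)
    have hcases : r ≤ 3 ∧ r ≤ d ∨ d * d - r ≤ 3 ∧ d * d - r ≤ d := by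
      rcases le_or_gt 3 d with h3 | h3
      · omega
      · interval_cases d <;> omega
    rcases hcases with ⟨h3, hr⟩ | ⟨h3, hr⟩
    · exact exists_isDominant_of_card_le_three h3 (hr.trans_eq hβ.symm)
    · obtain ⟨S, hcard, hS⟩ :=
        exists_isDominant_of_card_le_three (α := α) h3 (hr.trans_eq hβ.symm)
      refine ⟨Sᶜ, ?_, hS.compl (hα.trans hβ.symm)⟩
      rw [card_compl, Fintype.card_prod, hα, hβ]
      omega

end Marginals

section PartialTrace

variable {d1 d2 : ℕ}

lemma ptrace2_eq_ptrace1_swap (M : Matrix (Fin d1 × Fin d2) (Fin d1 × Fin d2) ℂ) :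
    ptrace2 M = ptrace1 (M.submatrix Prod.swap Prod.swap) := rfl

lemma isHermitian_ptrace1 {M : Matrix (Fin d1 × Fin d2) (Fin d1 × Fin d2) ℂ}
    (hM : M.IsHermitian) : (ptrace1 M).IsHermitian := by
  ext s t
  simp only [conjTranspose_apply, ptrace1, of_apply, star_sum, hM.apply]

lemma isHermitian_ptrace2 {M : Matrix (Fin d1 × Fin d2) (Fin d1 × Fin d2) ℂ}
    (hM : M.IsHermitian) : (ptrace2 M).IsHermitian :=
  isHermitian_ptrace1 (hM.submatrix Prod.swap)

lemma ptrace1_one_kronecker_mul (B : Matrix (Fin d2) (Fin d2) ℂ)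
    (M : Matrix (Fin d1 × Fin d2) (Fin d1 × Fin d2) ℂ) :
    ptrace1 ((1 ⊗ₖ B) * M) = B * ptrace1 M := by
  ext s t
  simp only [ptrace1, of_apply, mul_apply, kroneckerMap_apply, one_apply, Fintype.sum_prod_type,
    ite_mul, one_mul, zero_mul, mul_sum]
  simp [sum_comm (γ := Fin d1)]

lemma ptrace1_mul_one_kronecker (M : Matrix (Fin d1 × Fin d2) (Fin d1 × Fin d2) ℂ)
    (B : Matrix (Fin d2) (Fin d2) ℂ) : ptrace1 (M * (1 ⊗ₖ B)) = ptrace1 M * B := by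
  ext s t
  simp only [ptrace1, of_apply, mul_apply, kroneckerMap_apply, one_apply, Fintype.sum_prod_type,
    ite_mul, one_mul, zero_mul, mul_ite, mul_zero, sum_mul]
  simp [sum_comm (γ := Fin d1)]

lemma ptrace1_kronecker_one_mul_comm (A : Matrix (Fin d1) (Fin d1) ℂ)
    (M : Matrix (Fin d1 × Fin d2) (Fin d1 × Fin d2) ℂ) :
    ptrace1 ((A ⊗ₖ 1) * M) = ptrace1 (M * (A ⊗ₖ 1)) := by
  ext s t
  simp only [ptrace1, of_apply, mul_apply, kroneckerMap_apply, one_apply, Fintype.sum_prod_type,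
    mul_ite, mul_one, mul_zero, ite_mul, zero_mul, sum_ite_eq, sum_ite_eq', mem_univ, if_true]
  rw [sum_comm]
  exact sum_congr rfl fun j _ => sum_congr rfl fun i _ => mul_comm _ _

lemma ptrace1_kronecker_conj {V : Matrix (Fin d1) (Fin d1) ℂ} (hV : V ∈ unitaryGroup (Fin d1) ℂ)
    (W : Matrix (Fin d2) (Fin d2) ℂ) (M : Matrix (Fin d1 × Fin d2) (Fin d1 × Fin d2) ℂ) :
    ptrace1 ((V ⊗ₖ W)ᴴ * M * (V ⊗ₖ W)) = Wᴴ * ptrace1 M * W := by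
  have hleft : (V ⊗ₖ W)ᴴ = (1 ⊗ₖ Wᴴ) * (Vᴴ ⊗ₖ 1) := by
    rw [conjTranspose_kronecker, ← mul_kronecker_mul, one_mul, mul_one]
  have hright : V ⊗ₖ W = (V ⊗ₖ 1) * (1 ⊗ₖ W) := by
    rw [← mul_kronecker_mul, one_mul, mul_one]
  have hcancel : (V ⊗ₖ (1 : Matrix (Fin d2) (Fin d2) ℂ)) * (Vᴴ ⊗ₖ 1) = 1 := by
    rw [← mul_kronecker_mul, ← star_eq_conjTranspose, mem_unitaryGroup_iff.1 hV, one_mul,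
      one_kronecker_one]
  calc ptrace1 ((V ⊗ₖ W)ᴴ * M * (V ⊗ₖ W))
      = ptrace1 ((1 ⊗ₖ Wᴴ) * ((Vᴴ ⊗ₖ 1) * (M * (V ⊗ₖ 1))) * (1 ⊗ₖ W)) := by
        rw [hleft, hright]
        simp only [Matrix.mul_assoc]
    _ = Wᴴ * ptrace1 (M * ((V ⊗ₖ 1) * (Vᴴ ⊗ₖ 1))) * W := by
        rw [ptrace1_mul_one_kronecker, ptrace1_one_kronecker_mul, ptrace1_kronecker_one_mul_comm,
          Matrix.mul_assoc M]
    _ = Wᴴ * ptrace1 M * W := by rw [hcancel, Matrix.mul_one]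

lemma ptrace2_kronecker_conj (V : Matrix (Fin d1) (Fin d1) ℂ) {W : Matrix (Fin d2) (Fin d2) ℂ}
    (hW : W ∈ unitaryGroup (Fin d2) ℂ) (M : Matrix (Fin d1 × Fin d2) (Fin d1 × Fin d2) ℂ) :
    ptrace2 ((V ⊗ₖ W)ᴴ * M * (V ⊗ₖ W)) = Vᴴ * ptrace2 M * V := by
  have hswap : (V ⊗ₖ W).submatrix Prod.swap Prod.swap = W ⊗ₖ V := by
    ext
    exact mul_comm _ _
  rw [ptrace2_eq_ptrace1_swap, ptrace2_eq_ptrace1_swap, ← ptrace1_kronecker_conj hW, ← hswap,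
    conjTranspose_submatrix, submatrix_mul _ _ _ _ _ Prod.swap_bijective,
    submatrix_mul _ _ _ _ _ Prod.swap_bijective]

lemma ptrace1_apply_self_of_diag {M : Matrix (Fin d1 × Fin d2) (Fin d1 × Fin d2) ℂ}
    {p : Fin d1 × Fin d2 → ℝ} (hM : ∀ c, M c c = p c) (t : Fin d2) :
    ptrace1 M t t = (marginals p (.inl t) : ℝ) := by
  simp [ptrace1, marginals_apply, hM]

lemma ptrace2_apply_self_of_diag {M : Matrix (Fin d1 × Fin d2) (Fin d1 × Fin d2) ℂ}
    {p : Fin d1 × Fin d2 → ℝ} (hM : ∀ c, M c c = p c) (i : Fin d1) :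
    ptrace2 M i i = (marginals p (.inr i) : ℝ) := by
  simp [ptrace2, marginals_apply, hM]

lemma ptrace1_diagonal (p : Fin d1 × Fin d2 → ℝ) :
    ptrace1 (diagonal fun c => (p c : ℂ)) =
      diagonal fun t => ((marginals p (.inl t) : ℝ) : ℂ) := by
  ext s t
  by_cases h : s = t <;> simp [ptrace1, marginals_apply, h]

lemma ptrace2_diagonal (p : Fin d1 × Fin d2 → ℝ) :
    ptrace2 (diagonal fun c => (p c : ℂ)) =
      diagonal fun i => ((marginals p (.inr i) : ℝ) : ℂ) := by
  ext i j
  by_cases h : i = j <;> simp [ptrace2, marginals_apply, h]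

end PartialTrace

section Spectrum

variable {n : Type*}

lemma isHermitian_diagonal_ofReal [DecidableEq n] (v : n → ℝ) :
    (diagonal fun i => (v i : ℂ)).IsHermitian :=
  isHermitian_diagonal_of_self_adjoint _ (by ext; simp)

variable [Fintype n]

lemma exists_eq_comp_of_map_univ_eq {γ : Type*} {x y : n → γ}
    (h : univ.val.map x = univ.val.map y) : ∃ σ : Equiv.Perm n, x = y ∘ σ := by
  classical
  have hfiber (c : γ) : Nonempty ({i // x i = c} ≃ {i // y i = c}) := by
    rw [← Fintype.card_eq, Fintype.card_subtype, Fintype.card_subtype]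
    have hcount := congrArg (Multiset.count c) h
    simp only [Multiset.count_map, eq_comm (a := c)] at hcount
    exact hcount
  exact ⟨Equiv.ofFiberEquiv fun c => (hfiber c).some,
    funext fun i => (Equiv.ofFiberEquiv_map _ i).symm⟩

variable [DecidableEq n]

lemma exists_eigenvalues_eq_comp_of_eq_diagonal {v : n → ℝ} {M : Matrix n n ℂ}
    (hM : M.IsHermitian) (hv : M = diagonal fun i => (v i : ℂ)) :
    ∃ σ : Equiv.Perm n, hM.eigenvalues = v ∘ σ := by
  refine exists_eq_comp_of_map_univ_eq (Multiset.map_injective Complex.ofReal_injective ?_)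
  have hroots : M.charpoly.roots = univ.val.map fun i => (v i : ℂ) := by
    rw [hv, charpoly_diagonal,
      Polynomial.roots_prod _ _ (prod_ne_zero_iff.2 fun i _ => Polynomial.X_sub_C_ne_zero _)]
    simp
  rw [Multiset.map_map, Multiset.map_map]
  exact hM.roots_charpoly_eq_eigenvalues.symm.trans hroots

lemma exists_unitary_conj_eigenvalues {M : Matrix n n ℂ} (hM : M.IsHermitian) :
    ∃ V ∈ unitaryGroup n ℂ, M = V * (diagonal fun i => (hM.eigenvalues i : ℂ)) * Vᴴ :=
  ⟨_, hM.eigenvectorUnitary.2, hM.spectral_theorem⟩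

lemma conjTranspose_mul_conj_mul_cancel {V : Matrix n n ℂ} (hV : V ∈ unitaryGroup n ℂ)
    (M : Matrix n n ℂ) : Vᴴ * (V * M * Vᴴ) * V = M := by
  have hVV : Vᴴ * V = 1 := mem_unitaryGroup_iff'.1 hV
  calc Vᴴ * (V * M * Vᴴ) * V = (Vᴴ * V) * M * (Vᴴ * V) := by simp only [Matrix.mul_assoc]
    _ = M := by rw [hVV, Matrix.one_mul, Matrix.mul_one]

lemma mul_diagonal_mul_conjTranspose_apply_self (X : Matrix n n ℂ) (e : n → ℝ) (c : n) :
    (X * (diagonal fun i => (e i : ℂ)) * Xᴴ) c c = ((X.map Complex.normSq *ᵥ e) c : ℝ) := by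
  rw [mul_apply]
  simp only [mul_diagonal, conjTranspose_apply, mulVec, dotProduct, map_apply,
    Complex.ofReal_sum, Complex.ofReal_mul, Complex.normSq_eq_conj_mul_self, Complex.star_def]
  exact sum_congr rfl fun i _ => by ring

lemma map_normSq_mem_doublyStochastic {X : Matrix n n ℂ} (hX : X ∈ unitaryGroup n ℂ) :
    X.map Complex.normSq ∈ doublyStochastic ℝ n := by
  have hrow {Y : Matrix n n ℂ} (hY : Y ∈ unitaryGroup n ℂ) (i : n) :
      ∑ j, Complex.normSq (Y i j) = 1 := by
    have hself := mul_diagonal_mul_conjTranspose_apply_self Y 1 i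
    have hYY : Y * Yᴴ = 1 := mem_unitaryGroup_iff.1 hY
    simp only [Pi.one_apply, Complex.ofReal_one, diagonal_one, Matrix.mul_one, hYY,
      one_apply_eq] at hself
    simpa [mulVec, dotProduct] using (Complex.ofReal_injective hself).symm
  refine mem_doublyStochastic_iff_sum.2 ⟨fun _ _ => Complex.normSq_nonneg _, hrow hX, fun j => ?_⟩
  simpa using hrow (Unitary.star_mem hX) j

lemma permMatrix_mem_unitaryGroup (σ : Equiv.Perm n) : σ.permMatrix ℂ ∈ unitaryGroup n ℂ := by
  rw [mem_unitaryGroup_iff, star_eq_conjTranspose, conjTranspose_permMatrix, ← permMatrix_mul,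
    inv_mul_cancel, permMatrix_one]

lemma permMatrix_mul_diagonal_mul_conjTranspose (σ : Equiv.Perm n) (v : n → ℂ) :
    σ.permMatrix ℂ * diagonal v * (σ.permMatrix ℂ)ᴴ = diagonal (v ∘ σ) := by
  rw [conjTranspose_permMatrix, Equiv.Perm.permMatrix, Equiv.Perm.permMatrix,
    PEquiv.toMatrix_toPEquiv_mul, PEquiv.mul_toMatrix_toPEquiv]
  exact submatrix_diagonal _ _ σ.injective

end Spectrum

section UnitaryOrbit

variable {d1 d2 : ℕ}

lemma exists_sumElim_eigenvalues_eq_marginals_comp {p : Fin d1 × Fin d2 → ℝ}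
    {M : Matrix (Fin d1 × Fin d2) (Fin d1 × Fin d2) ℂ} (hp : M = diagonal fun c => (p c : ℂ))
    (h1 : (ptrace1 M).IsHermitian) (h2 : (ptrace2 M).IsHermitian) :
    ∃ σ : Equiv.Perm (Fin d2 ⊕ Fin d1),
      Sum.elim h1.eigenvalues h2.eigenvalues = marginals p ∘ σ := by
  obtain ⟨σ, hσ⟩ := exists_eigenvalues_eq_comp_of_eq_diagonal h1 (hp ▸ ptrace1_diagonal p)
  obtain ⟨τ, hτ⟩ := exists_eigenvalues_eq_comp_of_eq_diagonal h2 (hp ▸ ptrace2_diagonal p)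
  refine ⟨Equiv.sumCongr σ τ, ?_⟩
  ext (t | i)
  · simp [hσ]
  · simp [hτ]

lemma exists_doublyStochastic_sumElim_eigenvalues_eq (e : Fin d1 × Fin d2 → ℝ)
    {M X : Matrix (Fin d1 × Fin d2) (Fin d1 × Fin d2) ℂ}
    (hX : X ∈ unitaryGroup (Fin d1 × Fin d2) ℂ) (hM : M = X * (diagonal fun c => (e c : ℂ)) * Xᴴ)
    (h1 : (ptrace1 M).IsHermitian) (h2 : (ptrace2 M).IsHermitian) :
    ∃ Q ∈ doublyStochastic ℝ (Fin d1 × Fin d2),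
      Sum.elim h1.eigenvalues h2.eigenvalues = marginals (Q *ᵥ e) := by
  obtain ⟨V1, hV1, hdiag1⟩ := exists_unitary_conj_eigenvalues h1
  obtain ⟨V2, hV2, hdiag2⟩ := exists_unitary_conj_eigenvalues h2
  -- Conjugating `M` by `K = V2 ⊗ₖ V1` diagonalizes both of its partial traces at once.
  have hK := kronecker_mem_unitary hV2 hV1
  set K := V2 ⊗ₖ V1
  have hKMK : Kᴴ * M * K = (Kᴴ * X) * (diagonal fun c => (e c : ℂ)) * (Kᴴ * X)ᴴ := by
    rw [hM]
    simp only [conjTranspose_mul, conjTranspose_conjTranspose, Matrix.mul_assoc]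
  have hself (c) : (Kᴴ * M * K) c c = (((Kᴴ * X).map Complex.normSq *ᵥ e) c : ℝ) := by
    rw [hKMK, mul_diagonal_mul_conjTranspose_apply_self]
  refine ⟨(Kᴴ * X).map Complex.normSq,
    map_normSq_mem_doublyStochastic (mul_mem (Unitary.star_mem hK) hX), ?_⟩
  ext (t | i) <;> apply Complex.ofReal_injective
  · rw [← ptrace1_apply_self_of_diag hself, ptrace1_kronecker_conj hV2]
    conv_rhs => rw [hdiag1, conjTranspose_mul_conj_mul_cancel hV1]
    simp
  · rw [← ptrace2_apply_self_of_diag hself, ptrace2_kronecker_conj _ hV1]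
    conv_rhs => rw [hdiag2, conjTranspose_mul_conj_mul_cancel hV2]
    simp

/-- The spectra of the two partial traces of `D`, taken together, majorize those of every matrix
in the unitary orbit of `C`. Hermitian-ness of the partial traces is assumed only so that their
eigenvalues can be named. -/
def DominatesUnitaryOrbit (C D : Matrix (Fin d1 × Fin d2) (Fin d1 × Fin d2) ℂ) : Prop :=
  ∀ U : Matrix (Fin d1 × Fin d2) (Fin d1 × Fin d2) ℂ, U ∈ unitaryGroup (Fin d1 × Fin d2) ℂ →
    ∀ (hU1 : (ptrace1 (U * C * Uᴴ)).IsHermitian) (hU2 : (ptrace2 (U * C * Uᴴ)).IsHermitian)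
      (hD1 : (ptrace1 D).IsHermitian) (hD2 : (ptrace2 D).IsHermitian),
      Majorizes (Sum.elim hU1.eigenvalues hU2.eigenvalues)
        (Sum.elim hD1.eigenvalues hD2.eigenvalues)

lemma majorizes_marginals_mulVec {α β κ : Type*} [Fintype α] [Fintype β] [Fintype κ]
    [DecidableEq α] [DecidableEq β] {e : α × β → ℝ} {y : κ → ℝ}
    (h : ∀ σ : Equiv.Perm (α × β), Majorizes (marginals (e ∘ σ)) y)
    {Q : Matrix (α × β) (α × β) ℝ} (hQ : Q ∈ doublyStochastic ℝ (α × β)) :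
    Majorizes (marginals (Q *ᵥ e)) y := by
  let L : Matrix (α × β) (α × β) ℝ →ₗ[ℝ] (β ⊕ α → ℝ) :=
    marginals ∘ₗ (mulVecBilin ℝ ℝ).flip e
  have hconv := (convex_setOf_majorizes y).linear_preimage L
  rw [← SetLike.mem_coe, doublyStochastic_eq_convexHull_permMatrix] at hQ
  refine convexHull_min ?_ hconv hQ
  rintro _ ⟨σ, rfl⟩
  change Majorizes (marginals (σ.permMatrix ℝ *ᵥ e)) y
  rw [permMatrix_mulVec]
  exact h σ

lemma dominatesUnitaryOrbit_diagonal_iff {e f : Fin d1 × Fin d2 → ℝ} :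
    DominatesUnitaryOrbit (diagonal fun c => (e c : ℂ)) (diagonal fun c => (f c : ℂ)) ↔
      ∀ σ : Equiv.Perm (Fin d1 × Fin d2), Majorizes (marginals (e ∘ σ)) (marginals f) := by
  have hD := isHermitian_diagonal_ofReal f
  constructor
  · intro h σ
    have hUC := permMatrix_mul_diagonal_mul_conjTranspose σ fun c => (e c : ℂ)
    have hherm := hUC ▸ isHermitian_diagonal_ofReal (e ∘ σ)
    have hmaj := h _ (permMatrix_mem_unitaryGroup σ) (isHermitian_ptrace1 hherm)
      (isHermitian_ptrace2 hherm) (isHermitian_ptrace1 hD) (isHermitian_ptrace2 hD)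
    obtain ⟨τ, hτ⟩ := exists_sumElim_eigenvalues_eq_marginals_comp (p := e ∘ σ) hUC
      (isHermitian_ptrace1 hherm) (isHermitian_ptrace2 hherm)
    obtain ⟨τ', hτ'⟩ := exists_sumElim_eigenvalues_eq_marginals_comp (p := f) rfl
      (isHermitian_ptrace1 hD) (isHermitian_ptrace2 hD)
    rwa [hτ, hτ', majorizes_comp_equiv] at hmaj
  · intro h U hU hU1 hU2 hD1 hD2
    obtain ⟨Q, hQ, heig⟩ := exists_doublyStochastic_sumElim_eigenvalues_eq e hU rfl hU1 hU2
    obtain ⟨τ, hτ⟩ := exists_sumElim_eigenvalues_eq_marginals_comp rfl hD1 hD2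
    rw [heig, hτ]
    exact (majorizes_comp_equiv (.refl _) τ).2 (majorizes_marginals_mulVec h hQ)

lemma DominatesUnitaryOrbit.conj {C D : Matrix (Fin d1 × Fin d2) (Fin d1 × Fin d2) ℂ}
    (h : DominatesUnitaryOrbit C D) {V : Matrix (Fin d1 × Fin d2) (Fin d1 × Fin d2) ℂ}
    (hV : V ∈ unitaryGroup (Fin d1 × Fin d2) ℂ) : DominatesUnitaryOrbit (V * C * Vᴴ) D := by
  intro U hU
  have hUV : U * (V * C * Vᴴ) * Uᴴ = (U * V) * C * (U * V)ᴴ := by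
    simp only [conjTranspose_mul, Matrix.mul_assoc]
  rw [hUV]
  exact h _ (mul_mem hU hV)

lemma dominatesUnitaryOrbit_iff {C : Matrix (Fin d1 × Fin d2) (Fin d1 × Fin d2) ℂ}
    (hC : C.IsHermitian) {f : Fin d1 × Fin d2 → ℝ} :
    DominatesUnitaryOrbit C (diagonal fun c => (f c : ℂ)) ↔
      ∀ σ : Equiv.Perm (Fin d1 × Fin d2),
        Majorizes (marginals (hC.eigenvalues ∘ σ)) (marginals f) := by
  obtain ⟨V, hV, hspec⟩ := exists_unitary_conj_eigenvalues hC
  rw [← dominatesUnitaryOrbit_diagonal_iff]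
  refine ⟨fun h => ?_, fun h => hspec ▸ h.conj hV⟩
  have hconj := h.conj (Unitary.star_mem hV)
  rw [star_eq_conjTranspose, conjTranspose_conjTranspose] at hconj
  rwa [hspec, conjTranspose_mul_conj_mul_cancel hV] at hconj

end UnitaryOrbit

section FlatSpectrum

variable {γ : Type*}

lemma exists_isDiag_perm_iff [DecidableEq γ] {e : γ → ℝ} {P : Matrix γ γ ℂ → Prop} :
    (∃ D : Matrix γ γ ℂ, D.IsDiag ∧ (∃ g : Equiv.Perm γ, ∀ c, D c c = (e (g c) : ℂ)) ∧ P D) ↔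
      ∃ g : Equiv.Perm γ, P (diagonal fun c => (e (g c) : ℂ)) := by
  constructor
  · rintro ⟨D, hD, ⟨g, hg⟩, hP⟩
    refine ⟨g, ?_⟩
    rwa [← funext hg, ← show D.diag = fun c => D c c from rfl, hD.diagonal_diag]
  · rintro ⟨g, hP⟩
    exact ⟨_, isDiag_diagonal _, ⟨g, fun c => diagonal_apply_eq _ c⟩, hP⟩

lemma exists_card_eq_indicator_comp_perm (S : Finset γ) (σ : Equiv.Perm γ) :
    ∃ T : Finset γ, #T = #S ∧
      (S : Set γ).indicator (1 : γ → ℝ) ∘ σ = (T : Set γ).indicator 1 :=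
  ⟨S.map σ.symm.toEmbedding, card_map _, by
    ext c
    rw [coe_map, Equiv.coe_toEmbedding, Equiv.image_symm_eq_preimage]
    rfl⟩

lemma exists_perm_indicator_comp_eq [Finite γ] {S T : Finset γ} (h : #T = #S) :
    ∃ σ : Equiv.Perm γ, (S : Set γ).indicator (1 : γ → ℝ) ∘ σ = (T : Set γ).indicator 1 := by
  classical
  have := Fintype.ofFinite γ
  have f : T ≃ S := equivOfCardEq h
  refine ⟨f.extendSubtype, funext fun c => ?_⟩
  by_cases hc : c ∈ T
  · simp [hc, f.extendSubtype_mem c hc]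
  · simp [hc, f.extendSubtype_not_mem c hc]

lemma exists_perm_forall_perm_majorizes_iff {α β : Type*} [Fintype α] [Fintype β]
    {S₀ : Finset (α × β)} {l : ℝ} (hl : 0 < l) :
    (∃ g : Equiv.Perm (α × β), ∀ σ : Equiv.Perm (α × β),
      Majorizes (marginals ((l • (S₀ : Set (α × β)).indicator 1) ∘ σ))
        (marginals ((l • (S₀ : Set (α × β)).indicator 1) ∘ g))) ↔
    ∃ S : Finset (α × β), #S = #S₀ ∧ IsDominant S := by
  simp only [Pi.smul_comp, map_smul, majorizes_smul_iff hl]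
  constructor
  · rintro ⟨g, hg⟩
    obtain ⟨S, hS, hgS⟩ := exists_card_eq_indicator_comp_perm S₀ g
    refine ⟨S, hS, fun T hT => ?_⟩
    obtain ⟨σ, hσ⟩ := exists_perm_indicator_comp_eq (hT.trans hS)
    rw [← hσ, ← hgS]
    exact hg σ
  · rintro ⟨S, hS, hdom⟩
    obtain ⟨g, hg⟩ := exists_perm_indicator_comp_eq hS
    refine ⟨g, fun σ => ?_⟩
    obtain ⟨T, hT, hσ⟩ := exists_card_eq_indicator_comp_perm S₀ σ
    rw [hg, hσ]
    exact hdom T (hT.trans hS.symm)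

lemma exists_card_eq_rank_eigenvalues_eq_smul_indicator [Fintype γ] [DecidableEq γ]
    {C : Matrix γ γ ℂ} (hC : C.IsHermitian) {l : ℝ}
    (hspec : ∀ i, hC.eigenvalues i = 0 ∨ hC.eigenvalues i = l) :
    ∃ S : Finset γ, #S = C.rank ∧ hC.eigenvalues = l • (S : Set γ).indicator 1 := by
  refine ⟨univ.filter fun i => hC.eigenvalues i ≠ 0, ?_, funext fun i => ?_⟩
  · rw [hC.rank_eq_card_non_zero_eigs, Fintype.card_subtype]
  · rcases hspec i with h | h <;> simp [Set.indicator_apply, h, eq_comm]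

end FlatSpectrum

theorem flat_spectrum_characterization_large_d_general (d : ℕ) (hd : d ≠ 4) (r : ℕ)
    (C : Matrix (Fin d × Fin d) (Fin d × Fin d) ℂ) (hC : C.IsHermitian)
    (hrank : C.rank = r) (l : ℝ) (hl : 0 < l)
    (hspec : ∀ c, hC.eigenvalues c = 0 ∨ hC.eigenvalues c = l) :
    (∃ D : Matrix (Fin d × Fin d) (Fin d × Fin d) ℂ, D.IsDiag ∧
      (∃ g : Equiv.Perm (Fin d × Fin d), ∀ p, D p p = (hC.eigenvalues (g p) : ℂ)) ∧
      DominatesUnitaryOrbit C D) ↔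
    (r ≤ 3 ∨ d * d - 3 ≤ r) := by
  obtain ⟨S₀, hcard, heig⟩ := exists_card_eq_rank_eigenvalues_eq_smul_indicator hC hspec
  have hr : r ≤ d * d := by simpa [← hrank] using C.rank_le_card_width
  calc _ ↔ ∃ g : Equiv.Perm (Fin d × Fin d),
          DominatesUnitaryOrbit C (diagonal fun c => (hC.eigenvalues (g c) : ℂ)) :=
        exists_isDiag_perm_iff
    _ ↔ ∃ g : Equiv.Perm (Fin d × Fin d), ∀ σ : Equiv.Perm (Fin d × Fin d),
          Majorizes (marginals (hC.eigenvalues ∘ σ)) (marginals (hC.eigenvalues ∘ g)) :=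
        exists_congr fun g => dominatesUnitaryOrbit_iff hC
    _ ↔ ∃ S : Finset (Fin d × Fin d), #S = r ∧ IsDominant S := by
        rw [heig, exists_perm_forall_perm_majorizes_iff hl, hcard, hrank]
    _ ↔ r ≤ 3 ∨ d * d - 3 ≤ r :=
        exists_isDominant_iff (Fintype.card_fin d) (Fintype.card_fin d) hd hr

theorem flat_spectrum_characterization_large_d (d : ℕ) (hd : 24 ≤ d) (r : ℕ)
    (C : Matrix (Fin d × Fin d) (Fin d × Fin d) ℂ) (hC : C.PosSemidef)
    (hrank : C.rank = r) (l : ℝ) (hl : 0 < l)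
    -- the spectrum of `C` consists of `r` copies of `l` and zeros
    (hspec : ∃ g : Fin (d * d) ≃ Fin d × Fin d,
      ∀ k : Fin (d * d), hC.1.eigenvalues (g k) = if (k : ℕ) < r then l else 0) :
    (∃ D : Matrix (Fin d × Fin d) (Fin d × Fin d) ℂ, D.IsDiag ∧
      (∃ g : Equiv.Perm (Fin d × Fin d), ∀ p, D p p = (hC.1.eigenvalues (g p) : ℂ)) ∧
      ∀ U : Matrix (Fin d × Fin d) (Fin d × Fin d) ℂ,
        U ∈ Matrix.unitaryGroup (Fin d × Fin d) ℂ →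
        ∀ (hU1 : (ptrace1 (U * C * Uᴴ)).IsHermitian)
          (hU2 : (ptrace2 (U * C * Uᴴ)).IsHermitian)
          (hD1 : (ptrace1 D).IsHermitian) (hD2 : (ptrace2 D).IsHermitian),
          Majorizes (Sum.elim hU1.eigenvalues hU2.eigenvalues)
            (Sum.elim hD1.eigenvalues hD2.eigenvalues)) ↔
    (r ≤ 3 ∨ d * d - 3 ≤ r) :=
  flat_spectrum_characterization_large_d_general d (by omega) r C hC.1 hrank l hl fun c => by
    obtain ⟨g, hg⟩ := hspec
    rw [← g.apply_symm_apply c, hg]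
    split_ifs <;> simp
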